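/- (Lemma 2, converse direction: constraining f_sh = f_ra in the arc-eager model yields exactly the arc-hybrid hypothesis space.) Fix n ≥ 1 and any arc-eager parameterization (f_sh, f_ra, f_rl, f_re) satisfying f_sh = f_ra. Define the arc-hybrid parameterization g_sh = f_sh, g_rr = f_re, g_rl = f_rl. Then for every complete arc-eager transition sequence t' for a sentence of length n there exists a complete arc-hybrid transition sequence t for the same sentence with A(t) = A(t') and G(t) = F(t'). (The sequence t is obtained from t' by replacing each ra by sh and each re by rr, keeping all other transitions in order.) -/

import Mathlib

/-- A parser configuration: a stack of indices (head of the list = top of stack),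
a buffer of indices (head of the list = front of buffer), and a set of arcs
`(h, m)` meaning `h` is the head of modifier `m`. -/
structure Config where
  stack : List ℕ
  buffer : List ℕ
  arcs : Finset (ℕ × ℕ)

/-- Initial configuration for a sentence of length `n`:
empty stack, buffer `[0, 1, …, n]` (ROOT is index 0), empty arc set. -/
def initConfig (n : ℕ) : Config := ⟨[], List.range (n + 1), ∅⟩

/-- Stack-top feature of a configuration: `none` plays the role of the dummy index ⊥
used when the stack is empty. -/
def stackFeat (c : Config) : Option ℕ := c.stack.head?

/-- Buffer-front feature of a configuration: the end-marker index `n + 1`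
when the buffer is empty. -/
def bufFeat (n : ℕ) (c : Config) : ℕ := c.buffer.headD (n + 1)

/-- Arc-eager transition labels. -/
inductive ETrans
  | sh | rl | ra | re
deriving DecidableEq

/-- Single arc-eager transitions between configurations. -/
inductive EStep : Config → ETrans → Config → Prop
  | sh (σ b β A) : EStep ⟨σ, b :: β, A⟩ .sh ⟨b :: σ, β, A⟩
  | rl (s σ b β A) (h : ∀ x, (x, s) ∉ A) :
      EStep ⟨s :: σ, b :: β, A⟩ .rl ⟨σ, b :: β, insert (b, s) A⟩
  | ra (s σ b β A) :
      EStep ⟨s :: σ, b :: β, A⟩ .ra ⟨b :: s :: σ, β, insert (s, b) A⟩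
  | re (s σ β A) (h : ∃ x, (x, s) ∈ A) :
      EStep ⟨s :: σ, β, A⟩ .re ⟨σ, β, A⟩

/-- `ETrace c t c'` holds when `t` is a list of (configuration, transition) pairs,
each transition taken in the recorded configuration, leading from `c` to `c'`. -/
inductive ETrace : Config → List (Config × ETrans) → Config → Prop
  | nil (c) : ETrace c [] c
  | cons {c c' cf : Config} {τ : ETrans} {rest} :
      EStep c τ c' → ETrace c' rest cf → ETrace c ((c, τ) :: rest) cf

/-- Score of an arc-eager transition sequence under parameterization
`(fsh, fra, frl, fre)`: the sum, over the transitions, of the corresponding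
scoring function evaluated at the feature pair of the configuration in which
the transition is taken. -/
def escore (n : ℕ) (fsh fra frl fre : Option ℕ → ℕ → ℝ)
    (t : List (Config × ETrans)) : ℝ :=
  (t.map fun e =>
    (match e.2 with
      | ETrans.sh => fsh
      | ETrans.ra => fra
      | ETrans.rl => frl
      | ETrans.re => fre) (stackFeat e.1) (bufFeat n e.1)).sum

/-- Arc-hybrid transition labels. -/
inductive HTrans
  | sh | rr | rl
deriving DecidableEq

/-- Single arc-hybrid transitions between configurations. -/
inductive HStep : Config → HTrans → Config → Prop
  | sh (σ b β A) : HStep ⟨σ, b :: β, A⟩ .sh ⟨b :: σ, β, A⟩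
  | rr (s0 s1 σ β A) :
      HStep ⟨s0 :: s1 :: σ, β, A⟩ .rr ⟨s1 :: σ, β, insert (s1, s0) A⟩
  | rl (s σ b β A) :
      HStep ⟨s :: σ, b :: β, A⟩ .rl ⟨σ, b :: β, insert (b, s) A⟩

/-- `HTrace c t c'` holds when `t` is a list of (configuration, transition) pairs,
each transition taken in the recorded configuration, leading from `c` to `c'`. -/
inductive HTrace : Config → List (Config × HTrans) → Config → Prop
  | nil (c) : HTrace c [] c
  | cons {c c' cf : Config} {τ : HTrans} {rest} :
      HStep c τ c' → HTrace c' rest cf → HTrace c ((c, τ) :: rest) cf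

/-- Score of an arc-hybrid transition sequence under parameterization
`(gsh, grr, grl)`. -/
def hscore (n : ℕ) (gsh grr grl : Option ℕ → ℕ → ℝ)
    (t : List (Config × HTrans)) : ℝ :=
  (t.map fun e =>
    (match e.2 with
      | HTrans.sh => gsh
      | HTrans.rr => grr
      | HTrans.rl => grl) (stackFeat e.1) (bufFeat n e.1)).sum

/-!
An arc-eager parser creates the arc into `m` when `ra` pushes `m`, whereas an arc-hybrid parser
creates it when `rr` pops `m`. So an arc-hybrid run can imitate an arc-eager one by withholding
every arc whose modifier is still on the stack. This works because the head chosen by `ra` is the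
element directly below `m`, and it is still there when `m` is popped, so `rr` supplies exactly the
withheld arc. At the end only one element is left on the stack; nothing lies below it, so no arc is
withheld any longer.
-/

section SettledArcs

variable {σ : List ℕ} {A : Finset (ℕ × ℕ)} {h m : ℕ}

/-- The arcs of `A` whose modifier is not on the stack `σ`: those that the imitating arc-hybrid
run has already created. -/
def settledArcs (σ : List ℕ) (A : Finset (ℕ × ℕ)) : Finset (ℕ × ℕ) :=
  A.filter fun a => a.2 ∉ σ

theorem mem_settledArcs {a : ℕ × ℕ} : a ∈ settledArcs σ A ↔ a ∈ A ∧ a.2 ∉ σ :=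
  Finset.mem_filter

theorem settledArcs_insert_of_mem (hm : m ∈ σ) :
    settledArcs σ (insert (h, m) A) = settledArcs σ A :=
  (Finset.filter_insert ..).trans (if_neg (not_not_intro hm))

theorem settledArcs_insert_of_notMem (hm : m ∉ σ) :
    settledArcs σ (insert (h, m) A) = insert (h, m) (settledArcs σ A) :=
  (Finset.filter_insert ..).trans (if_pos hm)

theorem settledArcs_cons_of_headless (hm : ∀ x, (x, m) ∉ A) :
    settledArcs (m :: σ) A = settledArcs σ A := by
  refine Finset.filter_congr fun a ha => ?_
  have hne : a.2 ≠ m := fun heq => hm a.1 (heq ▸ ha)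
  simp only [List.mem_cons, hne, false_or]

theorem settledArcs_eq_insert_of_unique_head (hm : m ∉ σ) (hA : (h, m) ∈ A)
    (huniq : ∀ x, (x, m) ∈ A → x = h) :
    settledArcs σ A = insert (h, m) (settledArcs (m :: σ) A) := by
  ext ⟨x, y⟩
  simp only [mem_settledArcs, Finset.mem_insert, List.mem_cons, Prod.mk.injEq]
  grind

end SettledArcs

/-- The label that imitates an arc-eager transition in the arc-hybrid system. -/
def ETrans.toHybrid : ETrans → HTrans
  | .sh => .sh
  | .rl => .rl
  | .ra => .sh
  | .re => .rr

namespace Config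

/-- The arc-hybrid configuration imitating `c`: the same stack and buffer, with the arcs into
stack elements withheld. -/
def toHybrid (c : Config) : Config :=
  ⟨c.stack, c.buffer, settledArcs c.stack c.arcs⟩

theorem toHybrid_initConfig (n : ℕ) : (initConfig n).toHybrid = initConfig n :=
  rfl

/-- The invariant of arc-eager runs: no index occurs twice, buffer elements have no head, and a
head of a stack element is the element directly below it. The stack is listed from its top, so the
last clause reads `[m, h] <:+: c.stack`. -/
structure Coherent (c : Config) : Prop where
  nodup : (c.stack ++ c.buffer).Nodup
  buffer_headless : ∀ m ∈ c.buffer, ∀ h, (h, m) ∉ c.arcs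
  head_below : ∀ h m, (h, m) ∈ c.arcs → m ∈ c.stack → [m, h] <:+: c.stack

namespace Coherent

variable {σ β : List ℕ} {A : Finset (ℕ × ℕ)} {s b h m : ℕ}

theorem initConfig (n : ℕ) : (initConfig n).Coherent where
  nodup := List.nodup_range
  buffer_headless _ _ _ := Finset.notMem_empty _
  head_below _ _ harc := absurd harc (Finset.notMem_empty _)

theorem top_notMem_stack (hc : Coherent ⟨s :: σ, β, A⟩) : s ∉ σ :=
  fun hs => (List.nodup_cons.1 hc.nodup).1 (List.mem_append_left _ hs)

theorem top_notMem_buffer (hc : Coherent ⟨s :: σ, β, A⟩) : s ∉ β :=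
  fun hs => (List.nodup_cons.1 hc.nodup).1 (List.mem_append_right _ hs)

theorem exists_tail_eq_cons_of_head_top (hc : Coherent ⟨s :: σ, β, A⟩) (harc : (h, s) ∈ A) :
    ∃ ρ, σ = h :: ρ := by
  rcases List.infix_cons_iff.1 (hc.head_below h s harc List.mem_cons_self) with hpre | hinf
  · obtain ⟨ρ, hρ⟩ := (List.cons_prefix_cons.1 hpre).2
    exact ⟨ρ, hρ.symm⟩
  · exact absurd (hinf.subset List.mem_cons_self) hc.top_notMem_stack

theorem push (hc : Coherent ⟨σ, b :: β, A⟩) : Coherent ⟨b :: σ, β, A⟩ where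
  nodup := List.perm_middle.nodup_iff.1 hc.nodup
  buffer_headless m hm := hc.buffer_headless m (List.mem_cons_of_mem b hm)
  head_below h m harc hm := by
    rcases List.mem_cons.1 hm with rfl | hm
    · exact absurd harc (hc.buffer_headless m List.mem_cons_self h)
    · exact List.infix_cons (hc.head_below h m harc hm)

theorem pop (hc : Coherent ⟨s :: σ, β, A⟩) : Coherent ⟨σ, β, A⟩ where
  nodup := (List.nodup_cons.1 hc.nodup).2
  buffer_headless := hc.buffer_headless
  head_below h m harc hm := by
    have hinf := hc.head_below h m harc (List.mem_cons_of_mem s hm)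
    refine (List.infix_cons_iff.1 hinf).resolve_left fun hpre => hc.top_notMem_stack ?_
    exact (List.cons_prefix_cons.1 hpre).1 ▸ hm

theorem insert_arc (hc : Coherent ⟨σ, β, A⟩) (hβ : m ∉ β) (hσ : m ∈ σ → [m, h] <:+: σ) :
    Coherent ⟨σ, β, insert (h, m) A⟩ where
  nodup := hc.nodup
  buffer_headless y hy x harc := by
    rcases Finset.mem_insert.1 harc with heq | harc
    · obtain ⟨rfl, rfl⟩ := Prod.mk.inj heq
      exact hβ hy
    · exact hc.buffer_headless y hy x harc
  head_below x y harc hy := by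
    rcases Finset.mem_insert.1 harc with heq | harc
    · obtain ⟨rfl, rfl⟩ := Prod.mk.inj heq
      exact hσ hy
    · exact hc.head_below x y harc hy

theorem toHybrid_of_stack_singleton (hc : Coherent ⟨[s], β, A⟩) :
    toHybrid ⟨[s], β, A⟩ = ⟨[s], β, A⟩ := by
  have hs : ∀ h, (h, s) ∉ A := fun h harc => by
    obtain ⟨ρ, hρ⟩ := hc.exists_tail_eq_cons_of_head_top harc
    exact List.cons_ne_nil h ρ hρ.symm
  have hsettled : settledArcs [s] A = A := by
    rw [settledArcs_cons_of_headless hs]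
    exact Finset.filter_true_of_mem fun _ _ => List.not_mem_nil
  exact congrArg (Config.mk [s] β) hsettled

end Coherent

end Config

section Simulation

variable {c c' : Config} {τ : ETrans} {t : List (Config × ETrans)}

theorem EStep.coherent (hstep : EStep c τ c') (hc : c.Coherent) : c'.Coherent := by
  cases hstep with
  | sh σ b β A => exact hc.push
  | rl s σ b β A hs =>
    exact hc.pop.insert_arc hc.top_notMem_buffer fun hσ => absurd hσ hc.top_notMem_stack
  | ra s σ b β A =>
    exact hc.push.insert_arc hc.push.top_notMem_buffer fun _ => List.infix_append [] [b, s] σ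
  | re s σ β A hs => exact hc.pop

theorem EStep.toHybrid (hstep : EStep c τ c') (hc : c.Coherent) :
    HStep c.toHybrid τ.toHybrid c'.toHybrid := by
  cases hstep with
  | sh σ b β A =>
    have hb : ∀ x, (x, b) ∉ A := hc.buffer_headless b List.mem_cons_self
    simpa only [Config.toHybrid, ETrans.toHybrid, settledArcs_cons_of_headless hb]
      using HStep.sh σ b β _
  | rl s σ b β A hs =>
    simpa only [Config.toHybrid, ETrans.toHybrid, settledArcs_cons_of_headless hs,
      settledArcs_insert_of_notMem hc.top_notMem_stack] using HStep.rl s σ b β _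
  | ra s σ b β A =>
    have hb : ∀ x, (x, b) ∉ A := hc.buffer_headless b List.mem_cons_self
    have hsettled : settledArcs (b :: s :: σ) (insert (s, b) A) = settledArcs (s :: σ) A := by
      rw [settledArcs_insert_of_mem List.mem_cons_self, settledArcs_cons_of_headless hb]
    simpa only [Config.toHybrid, ETrans.toHybrid, hsettled] using HStep.sh (s :: σ) b β _
  | re s σ β A hs =>
    obtain ⟨h, harc⟩ := hs
    obtain ⟨ρ, rfl⟩ := hc.exists_tail_eq_cons_of_head_top harc
    have huniq : ∀ x, (x, s) ∈ A → x = h := fun x hx => by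
      obtain ⟨_, heq⟩ := hc.exists_tail_eq_cons_of_head_top hx
      exact (List.head_eq_of_cons_eq heq).symm
    simpa only [Config.toHybrid, ETrans.toHybrid,
      settledArcs_eq_insert_of_unique_head hc.top_notMem_stack harc huniq]
      using HStep.rr s h ρ β _

theorem ETrace.coherent (ht : ETrace c t c') (hc : c.Coherent) : c'.Coherent := by
  induction ht with
  | nil c => exact hc
  | cons hstep _ ih => exact ih (hstep.coherent hc)

theorem ETrace.toHybrid (ht : ETrace c t c') (hc : c.Coherent) :
    HTrace c.toHybrid (t.map (Prod.map Config.toHybrid ETrans.toHybrid)) c'.toHybrid := by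
  induction ht with
  | nil c => exact HTrace.nil _
  | cons hstep _ ih => exact HTrace.cons (hstep.toHybrid hc) (ih (hstep.coherent hc))

theorem hscore_map_toHybrid (n : ℕ) (fsh frl fre : Option ℕ → ℕ → ℝ)
    (t : List (Config × ETrans)) :
    hscore n fsh fre frl (t.map (Prod.map Config.toHybrid ETrans.toHybrid)) =
      escore n fsh fsh frl fre t := by
  rw [hscore, escore, List.map_map]
  congr 2
  funext ⟨c, τ⟩
  cases τ <;> rfl

end Simulation

/-- **Lemma 2, converse direction (constraining `fsh = fra` yields arc-hybrid).**
Fix `n ≥ 1` and an arc-eager parameterization `(fsh, fra, frl, fre)` with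
`fsh = fra`, and endow the arc-hybrid system with `gsh = fsh`, `grr = fre`,
`grl = frl`. Then for every complete arc-eager transition sequence `t'` for a
sentence of length `n` there is a complete arc-hybrid transition sequence `t`
producing the same arc set and with `G(t) = F(t')`. -/
theorem arc_hybrid_matches_constrained_arc_eager
    (n : ℕ) (hn : 1 ≤ n)
    (fsh fra frl fre : Option ℕ → ℕ → ℝ)
    (hconstr : fsh = fra)
    (t' : List (Config × ETrans)) (A : Finset (ℕ × ℕ))
    (ht' : ETrace (initConfig n) t' ⟨[0], [], A⟩) :
    ∃ t : List (Config × HTrans),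
      HTrace (initConfig n) t ⟨[0], [], A⟩ ∧
      hscore n fsh fre frl t = escore n fsh fra frl fre t' := by
  subst hconstr
  refine ⟨t'.map (Prod.map Config.toHybrid ETrans.toHybrid), ?_,
    hscore_map_toHybrid n fsh frl fre t'⟩
  have hinit := Config.Coherent.initConfig n
  simpa only [Config.toHybrid_initConfig,
    (ht'.coherent hinit).toHybrid_of_stack_singleton] using ht'.toHybrid hinit
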